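/- Fix a prime power q and a positive integer n. The number of dynamical equivalence classes of F_q-linear transformations of (F_q)^n is at least Q(n), the number of partitions of n into distinct parts. Equivalently, there exists a family of linear transformations A_λ : (F_q)^n → (F_q)^n, indexed by the partitions λ of n with distinct parts, such that A_λ and A_μ are not dynamically equivalent whenever λ ≠ μ. -/

import Mathlib

/-!
Nilpotent maps suffice. For a finite set `S` of part sizes let `B` be the nilpotent map with one
Jordan block of size `p` for each `p ∈ S`. The size of the image of the `k`-th iterate is invariant
under dynamical equivalence (`DynEquiv.card_range_iterate`), and for `B` it equals
`q ^ ∑ p ∈ S, (p - k)` with truncated subtraction (`card_range_iterate_blockShift`). As a function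
of `k`, the exponent has second difference the indicator of `k + 1 ∈ S`, so it determines the
positive elements of `S` (`sum_tsub_second_difference`).
-/

open Polynomial

/-- Two self-maps (of possibly different sets) are *dynamically equivalent* if they are
conjugate by a bijection, i.e. their functional graphs are isomorphic. -/
def DynEquiv {X Y : Type*} (f : X → X) (g : Y → Y) : Prop :=
  ∃ σ : X ≃ Y, ∀ x, σ (f x) = g (σ x)

theorem DynEquiv.trans {X Y Z : Type*} {f : X → X} {g : Y → Y} {h : Z → Z}
    (hfg : DynEquiv f g) (hgh : DynEquiv g h) : DynEquiv f h := by
  obtain ⟨σ, hσ⟩ := hfg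
  obtain ⟨τ, hτ⟩ := hgh
  exact ⟨σ.trans τ, fun x => by simp [hσ, hτ]⟩

theorem DynEquiv.symm {X Y : Type*} {f : X → X} {g : Y → Y} (h : DynEquiv f g) :
    DynEquiv g f := by
  obtain ⟨σ, hσ⟩ := h
  exact ⟨σ.symm, fun y => by rw [Equiv.symm_apply_eq, hσ, Equiv.apply_symm_apply]⟩

theorem DynEquiv.card_range_iterate {X Y : Type*} {f : X → X} {g : Y → Y} (h : DynEquiv f g)
    (k : ℕ) : Nat.card (Set.range f^[k]) = Nat.card (Set.range g^[k]) := by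
  obtain ⟨σ, hσ⟩ := h
  have hk : σ ∘ f^[k] = g^[k] ∘ σ := funext fun x => (Function.Semiconj.iterate_right hσ k) x
  rw [← σ.surjective.range_comp g^[k], ← hk, Set.range_comp,
    Nat.card_image_of_injective σ.injective]

/-- The nilpotent map on functions on the disjoint union over `p ∈ S` of blocks `{0, …, p - 1}`
that shifts each block by one and pads with zero: one Jordan block of size `p` for each `p ∈ S`. -/
def blockShift (F : Type*) [Field F] (S : Finset ℕ) :
    ((Σ p : S, Fin p.1) → F) →ₗ[F] ((Σ p : S, Fin p.1) → F) where
  toFun v i := if h : i.2.1 + 1 < i.1.1 then v ⟨i.1, ⟨i.2.1 + 1, h⟩⟩ else 0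
  map_add' v w := by
    ext i
    by_cases h : i.2.1 + 1 < i.1.1 <;> simp [h]
  map_smul' c v := by
    ext i
    by_cases h : i.2.1 + 1 < i.1.1 <;> simp [h]

theorem iterate_blockShift (F : Type*) [Field F] (S : Finset ℕ) (k : ℕ)
    (v : (Σ p : S, Fin p.1) → F) (i : Σ p : S, Fin p.1) :
    (blockShift F S)^[k] v i =
      if h : i.2.1 + k < i.1.1 then v ⟨i.1, ⟨i.2.1 + k, h⟩⟩ else 0 := by
  induction k generalizing v with
  | zero => simp
  | succ k ih =>
    rw [Function.iterate_succ_apply, ih]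
    by_cases h : i.2.1 + (k + 1) < i.1.1
    · have h' : i.2.1 + k < i.1.1 := by omega
      simp [h, h', blockShift, add_assoc]
    · have h'' : ¬ i.2.1 + k + 1 < i.1.1 := by omega
      simp [h, h'', blockShift]

theorem card_range_iterate_blockShift (F : Type*) [Field F] [Fintype F] (S : Finset ℕ) (k : ℕ) :
    Nat.card (Set.range (blockShift F S)^[k]) = Fintype.card F ^ ∑ p ∈ S, (p - k) := by
  -- The iterate factors as a surjective restriction followed by an injective extension by zero.
  let ι : (Σ p : S, Fin (p.1 - k)) → (Σ p : S, Fin p.1) :=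
    fun i => ⟨i.1, ⟨i.2.1 + k, by have := i.2.2; omega⟩⟩
  let E : ((Σ p : S, Fin (p.1 - k)) → F) → ((Σ p : S, Fin p.1) → F) :=
    fun w i => if h : i.2.1 + k < i.1.1 then w ⟨i.1, ⟨i.2.1, by omega⟩⟩ else 0
  have hι : Function.Injective ι := by
    rintro ⟨p, a, ha⟩ ⟨q, b, hb⟩ h
    simp only [ι, Sigma.mk.injEq] at h
    obtain ⟨rfl, h⟩ := h
    simpa using h
  have hE : Function.Injective E := by
    intro w w' h
    ext ⟨p, a, ha⟩
    have := congrFun h ⟨p, ⟨a, by omega⟩⟩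
    have h' : a + k < p.1 := by omega
    simpa [E, h'] using this
  have hB : (blockShift F S)^[k] = E ∘ fun v => v ∘ ι := by
    ext v i
    rw [iterate_blockShift]
    rfl
  rw [hB, hι.surjective_comp_right.range_comp, Nat.card_range_of_injective hE, Nat.card_fun]
  simp only [Nat.card_eq_fintype_card, Fintype.card_sigma, Fintype.card_fin]
  rw [Finset.sum_coe_sort S fun p => p - k]

theorem sum_tsub_second_difference (S : Finset ℕ) (k : ℕ) :
    ∑ p ∈ S, (p - k) + ∑ p ∈ S, (p - (k + 2)) =
      2 * ∑ p ∈ S, (p - (k + 1)) + if k + 1 ∈ S then 1 else 0 := by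
  rw [← Finset.sum_ite_eq S (k + 1) fun _ => 1, Finset.mul_sum, ← Finset.sum_add_distrib,
    ← Finset.sum_add_distrib]
  refine Finset.sum_congr rfl fun p _ => ?_
  split_ifs <;> omega

theorem mem_iff_of_dynEquiv_blockShift {F : Type*} [Field F] [Fintype F] {S T : Finset ℕ}
    (h : DynEquiv (blockShift F S) (blockShift F T)) (k : ℕ) : k + 1 ∈ S ↔ k + 1 ∈ T := by
  have hsum (j : ℕ) : ∑ p ∈ S, (p - j) = ∑ p ∈ T, (p - j) := by
    have := h.card_range_iterate j
    rw [card_range_iterate_blockShift, card_range_iterate_blockShift] at this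
    exact Nat.pow_right_injective Fintype.one_lt_card this
  have hS := sum_tsub_second_difference S k
  have hT := sum_tsub_second_difference T k
  rw [hsum, hsum, hsum] at hS
  by_cases h₁ : k + 1 ∈ S <;> by_cases h₂ : k + 1 ∈ T <;> simp [h₁, h₂] at hS hT ⊢ <;> omega

theorem card_sigma_parts {n : ℕ} (lam : {lam : n.Partition // lam.parts.Nodup}) :
    Fintype.card (Σ p : (⟨lam.1.parts, lam.2⟩ : Finset ℕ), Fin p.1) = Fintype.card (Fin n) := by
  simp only [Fintype.card_sigma, Fintype.card_fin]
  rw [Finset.sum_coe_sort _ fun p => p, Finset.sum, Multiset.map_id']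
  exact lam.1.parts_sum

/-- There is a family of pairwise dynamically inequivalent linear transformations of
`(F_q)^n` indexed by the partitions of `n` into distinct parts; in particular the
number of dynamical equivalence classes of linear transformations of `(F_q)^n` is at
least `Q(n)`. -/
theorem stmt7 (F : Type*) [Field F] [Fintype F] (n : ℕ) (hn : 0 < n) :
    ∃ A : {lam : n.Partition // lam.parts.Nodup} → ((Fin n → F) →ₗ[F] (Fin n → F)),
      ∀ lam mu : {lam : n.Partition // lam.parts.Nodup},
        lam ≠ mu → ¬ DynEquiv ⇑(A lam) ⇑(A mu) := by
  let e (lam : {lam : n.Partition // lam.parts.Nodup}) :=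
    LinearEquiv.funCongrLeft F F (Fintype.equivOfCardEq (card_sigma_parts lam))
  let A (lam : {lam : n.Partition // lam.parts.Nodup}) : (Fin n → F) →ₗ[F] (Fin n → F) :=
    (e lam).symm.toLinearMap ∘ₗ blockShift F ⟨lam.1.parts, lam.2⟩ ∘ₗ (e lam).toLinearMap
  have hA (lam) : DynEquiv (A lam) (blockShift F ⟨lam.1.parts, lam.2⟩) :=
    ⟨(e lam).toEquiv, fun x => (e lam).apply_symm_apply _⟩
  refine ⟨A, fun lam mu hne h => hne ?_⟩
  have hmem := mem_iff_of_dynEquiv_blockShift (((hA lam).symm.trans h).trans (hA mu))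
  refine Subtype.ext (Nat.Partition.ext ((Multiset.Nodup.ext lam.2 mu.2).2 fun p => ?_))
  cases p with
  | zero =>
    exact iff_of_false (fun h => (lam.1.parts_pos h).ne rfl) fun h => (mu.1.parts_pos h).ne rfl
  | succ k => exact hmem k
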